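/- For every g ∈ O₇(𝔽₅), the conjugate g⁻¹·A₅·g does NOT vanish at all positions of P; that is, there exists a position (i,j) ∈ P with (g⁻¹·A₅·g)ᵢⱼ ≠ 0. -/

import Mathlib

open Matrix

/-- The 7×7 anti-diagonal identity matrix over `𝔽₅` (0-indexed: entry 1 iff `i + j = 6`). -/
def Jmat : Matrix (Fin 7) (Fin 7) (ZMod 5) :=
  fun i j => if (i : ℕ) + (j : ℕ) = 6 then 1 else 0

/-- The matrix `A₅ ∈ M₇(𝔽₅)` from Appendix A of the paper. -/
def A5 : Matrix (Fin 7) (Fin 7) (ZMod 5) :=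
  !![0,0,1,1,1,0,0;
     1,0,0,0,0,0,0;
     0,1,0,0,0,0,1;
     0,0,0,0,0,0,1;
     0,1,0,0,0,0,1;
     0,0,1,0,1,0,0;
     0,0,0,0,0,1,0]

/-- The set of matrix positions of Lemma 2.2 (0-indexed; in the paper's 1-indexed
convention these are (3,1),(4,1),(5,1),(5,2),(6,1),(6,2),(6,3),(7,1),(7,2),(7,3),(7,4),(7,5)). -/
def P : Set (Fin 7 × Fin 7) :=
  {(2,0),(3,0),(4,0),(4,1),(5,0),(5,1),(5,2),(6,0),(6,1),(6,2),(6,3),(6,4)}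

/-!
Suppose `B = g⁻¹ A₅ g` vanishes on `P` and let `v` be the first column of `g`. The shape of `B` and
its self-adjointness force `⟨v, v⟩ = ⟨v, A₅ v⟩ = ⟨v, A₅² v⟩ = ⟨v, A₅³ v⟩ = 0` and make `⟨v, A₅⁴ v⟩`
a square. The characteristic polynomial of `A₅` is `X (X³ - 1) (X³ - 2³)`, so `𝔽₅⁷` is the
orthogonal sum of a line killed by `A₅` and two copies of `𝔽₅[X]/(X³ - 1)`, on which `A₅` acts as
`1` and `2` times a rotation and the numbers `⟨z, A₅ᵏ z⟩` are multiples of the coefficients of `z²`.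
The coefficients of a square in `𝔽₅[X]/(X³ - 1)` have a square sum and a square norm; together with
the vanishing of the moments of `v` these conditions leave only `v = 0`.
-/

section Moments

variable {R m n : Type*} [CommRing R] [Fintype m] [Fintype n]

theorem isSelfAdjoint_of_intertwine {S A : Matrix n n R} {B : Matrix m m R} {g : Matrix n m R}
    (hS : S.IsSelfAdjoint A) (hA : A * g = g * B) : (gᵀ * S * g).IsSelfAdjoint B := by
  have hS' : Aᵀ * S = S * A := hS
  calc Bᵀ * (gᵀ * S * g)
      = (g * B)ᵀ * S * g := by simp only [transpose_mul, Matrix.mul_assoc]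
    _ = gᵀ * (Aᵀ * S) * g := by rw [← hA]; simp only [transpose_mul, Matrix.mul_assoc]
    _ = gᵀ * S * g * B := by rw [hS']; simp only [Matrix.mul_assoc, hA]

variable [DecidableEq m] [DecidableEq n]

/-- The `k`-th moment `⟨v, Aᵏ v⟩` of the vector `v` under the endomorphism `A`, for the bilinear
form with Gram matrix `S`. -/
def moment (S A : Matrix n n R) (v : n → R) (k : ℕ) : R :=
  v ⬝ᵥ S *ᵥ (A ^ k *ᵥ v)

theorem pow_mul_eq_mul_pow_of_intertwine {A : Matrix n n R} {B : Matrix m m R} {g : Matrix n m R}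
    (hA : A * g = g * B) (k : ℕ) : A ^ k * g = g * B ^ k := by
  induction k with
  | zero => rw [pow_zero, pow_zero, Matrix.one_mul, Matrix.mul_one]
  | succ k ih =>
    rw [pow_succ, Matrix.mul_assoc, hA, ← Matrix.mul_assoc, ih, Matrix.mul_assoc, ← pow_succ]

theorem moment_mulVec_of_intertwine (S : Matrix n n R) {A : Matrix n n R} {B : Matrix m m R}
    {g : Matrix n m R} (hA : A * g = g * B) (v : m → R) (k : ℕ) :
    moment S A (g *ᵥ v) k = moment (gᵀ * S * g) B v k := by
  simp only [moment, mulVec_mulVec, ← Matrix.mul_assoc]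
  rw [Matrix.mul_assoc S, pow_mul_eq_mul_pow_of_intertwine hA, ← vecMul_transpose,
    ← dotProduct_mulVec, mulVec_mulVec]
  simp only [Matrix.mul_assoc]

theorem moment_add_of_isSelfAdjoint {S A : Matrix n n R} (hS : S.IsSelfAdjoint A) (v : n → R)
    (i j : ℕ) : moment S A v (i + j) = A ^ i *ᵥ v ⬝ᵥ S *ᵥ (A ^ j *ᵥ v) := by
  have hpow : S * A ^ i = Aᵀ ^ i * S := SemiconjBy.pow_right (show SemiconjBy S A Aᵀ from hS.symm) i
  rw [← vecMul_transpose, ← dotProduct_mulVec, transpose_pow, mulVec_mulVec, ← hpow, moment,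
    pow_add, mulVec_mulVec, mulVec_mulVec, Matrix.mul_assoc]

theorem moment_add_left (S T A : Matrix n n R) (v : n → R) (k : ℕ) :
    moment (S + T) A v k = moment S A v k + moment T A v k := by
  rw [moment, add_mulVec, dotProduct_add, moment, moment]

theorem moment_smul_smul (a b : R) (S A : Matrix n n R) (v : n → R) (k : ℕ) :
    moment (a • S) (b • A) v k = a * b ^ k * moment S A v k := by
  simp only [moment, smul_pow, smul_mulVec, mulVec_smul, dotProduct_smul, smul_eq_mul]
  ring

theorem moment_one_one (v : n → R) (k : ℕ) : moment 1 1 v k = v ⬝ᵥ v := by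
  rw [moment, one_pow, one_mulVec, one_mulVec]

end Moments

/-- The antidiagonal identity matrix, the Gram matrix of the split form `∑ᵢ xᵢ yₙ₋₁₋ᵢ`. -/
def antidiagOne (n : ℕ) (R : Type*) [Zero R] [One R] : Matrix (Fin n) (Fin n) R :=
  Fin.revPerm.permMatrix R

theorem antidiagOne_mulVec {R : Type*} [CommRing R] {n : ℕ} (y : Fin n → R) :
    antidiagOne n R *ᵥ y = y ∘ Fin.rev :=
  permMatrix_mulVec _

theorem Jmat_eq_antidiagOne : Jmat = antidiagOne 7 (ZMod 5) := by
  decide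

section Flag

variable {R : Type*} [CommRing R] {B : Matrix (Fin 7) (Fin 7) R}

theorem col_zero_eq_zero_of_vanishing (hB : ∀ p ∈ P, B p.1 p.2 = 0) {i : Fin 7} (hi : 2 ≤ i) :
    B i 0 = 0 := by
  refine hB (i, 0) ?_
  fin_cases i <;> simp [P] at hi ⊢

theorem sq_col_zero_eq_zero_of_vanishing (hB : ∀ p ∈ P, B p.1 p.2 = 0) {i : Fin 7} (hi : 4 ≤ i) :
    (B ^ 2) i 0 = 0 := by
  have hcol_one : B i 1 = 0 := by
    refine hB (i, 1) ?_
    fin_cases i <;> simp [P] at hi ⊢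
  rw [sq, Matrix.mul_apply]
  refine Finset.sum_eq_zero fun j _ => ?_
  obtain rfl | rfl | hj : j = 0 ∨ j = 1 ∨ 2 ≤ j := by omega
  · rw [col_zero_eq_zero_of_vanishing hB (le_trans (by decide) hi), zero_mul]
  · rw [hcol_one, zero_mul]
  · rw [col_zero_eq_zero_of_vanishing hB hj, mul_zero]

theorem moment_single_zero_of_vanishing (hself : (antidiagOne 7 R).IsSelfAdjoint B)
    (hB : ∀ p ∈ P, B p.1 p.2 = 0) :
    (∀ k < 4, moment (antidiagOne 7 R) B (Pi.single 0 1) k = 0) ∧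
      IsSquare (moment (antidiagOne 7 R) B (Pi.single 0 1) 4) := by
  have hcol := @col_zero_eq_zero_of_vanishing _ _ _ hB
  have hsq := @sq_col_zero_eq_zero_of_vanishing _ _ _ hB
  have hmoment (i j : ℕ) : moment (antidiagOne 7 R) B (Pi.single 0 1) (i + j) =
      ∑ l, (B ^ i) l 0 * (B ^ j) l.rev 0 := by
    simp [moment_add_of_isSelfAdjoint hself, antidiagOne_mulVec, dotProduct]
  refine ⟨fun k hk => ?_, (B ^ 2) 3 0, ?_⟩
  · interval_cases k
    · rw [hmoment 0 0]
      simp [Fin.sum_univ_seven]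
    · rw [hmoment 0 1]
      simp [Fin.sum_univ_seven, hcol]
    · rw [hmoment 1 1]
      simp [Fin.sum_univ_seven, hcol]
    · rw [hmoment 1 2]
      simp [Fin.sum_univ_seven, hcol, hsq]
  · rw [hmoment 2 2]
    simp [Fin.sum_univ_seven, hsq]

end Flag

section CyclicAlgebra

variable {R : Type*} [CommRing R]

/-- The rotation `(z₀, z₁, z₂) ↦ (z₁, z₂, z₀)`, which is division by `X` on
`z₀ + z₁ X + z₂ X² ∈ R[X]/(X³ - 1)`. -/
def rotationMatrix (R : Type*) [Zero R] [One R] : Matrix (Fin 3) (Fin 3) R :=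
  (finRotate 3).permMatrix R

/-- The moments of `z` under the rotation for the split form on `R³`. They repeat with period three,
and those of order `0`, `1`, `2` are the coefficients of `X²`, `1`, `X` in
`(z₀ + z₁ X + z₂ X²)² ∈ R[X]/(X³ - 1)`. -/
def cyclicMoment (z : Fin 3 → R) (k : ℕ) : R :=
  moment (antidiagOne 3 R) (rotationMatrix R) z k

/-- The norm of `x + y ω + z ω²` from `R[ω]` to `R`, where `ω² + ω + 1 = 0`. -/
def eisensteinNorm (x y z : R) : R :=
  x ^ 2 + y ^ 2 + z ^ 2 - x * y - y * z - z * x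

theorem rotationMatrix_mulVec (z : Fin 3 → R) : rotationMatrix R *ᵥ z = ![z 1, z 2, z 0] := by
  rw [rotationMatrix, permMatrix_mulVec]
  ext i
  fin_cases i <;> rfl

theorem rotationMatrix_pow_three : rotationMatrix R ^ 3 = 1 := by
  refine ext_of_mulVec_single fun i => ?_
  rw [pow_three, ← mulVec_mulVec, ← mulVec_mulVec, one_mulVec]
  simp only [rotationMatrix_mulVec]
  ext j
  fin_cases j <;> rfl

theorem dotProduct_antidiagOne_three_mulVec (x y : Fin 3 → R) :
    x ⬝ᵥ antidiagOne 3 R *ᵥ y = x 0 * y 2 + x 1 * y 1 + x 2 * y 0 := by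
  rw [antidiagOne_mulVec, dotProduct, Fin.sum_univ_three]
  rfl

theorem cyclicMoment_zero (z : Fin 3 → R) : cyclicMoment z 0 = z 1 ^ 2 + 2 * z 0 * z 2 := by
  rw [cyclicMoment, moment, dotProduct_antidiagOne_three_mulVec, pow_zero, one_mulVec]
  ring

theorem cyclicMoment_one (z : Fin 3 → R) : cyclicMoment z 1 = z 0 ^ 2 + 2 * z 1 * z 2 := by
  rw [cyclicMoment, moment, dotProduct_antidiagOne_three_mulVec, pow_one, rotationMatrix_mulVec]
  simp only [cons_val]
  ring

theorem cyclicMoment_two (z : Fin 3 → R) : cyclicMoment z 2 = z 2 ^ 2 + 2 * z 0 * z 1 := by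
  rw [cyclicMoment, moment, dotProduct_antidiagOne_three_mulVec, sq, ← mulVec_mulVec,
    rotationMatrix_mulVec, rotationMatrix_mulVec]
  simp only [cons_val]
  ring

theorem cyclicMoment_add_three (z : Fin 3 → R) (k : ℕ) :
    cyclicMoment z (k + 3) = cyclicMoment z k := by
  rw [cyclicMoment, moment, pow_add, rotationMatrix_pow_three, mul_one, cyclicMoment, moment]

theorem isSquare_sum_cyclicMoment (z : Fin 3 → R) :
    IsSquare (cyclicMoment z 0 + cyclicMoment z 1 + cyclicMoment z 2) := by
  refine ⟨z 0 + z 1 + z 2, ?_⟩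
  rw [cyclicMoment_zero, cyclicMoment_one, cyclicMoment_two]
  ring

theorem isSquare_eisensteinNorm_cyclicMoment (z : Fin 3 → R) :
    IsSquare (eisensteinNorm (cyclicMoment z 0) (cyclicMoment z 1) (cyclicMoment z 2)) := by
  refine ⟨eisensteinNorm (z 0) (z 1) (z 2), ?_⟩
  rw [cyclicMoment_zero, cyclicMoment_one, cyclicMoment_two, eisensteinNorm, eisensteinNorm]
  ring

theorem eq_zero_of_cyclicMoment_eq_zero [NoZeroDivisors R] (h_three : (3 : R) ≠ 0) {z : Fin 3 → R}
    (hzero : cyclicMoment z 0 = 0) (hone : cyclicMoment z 1 = 0) (htwo : cyclicMoment z 2 = 0) :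
    z = 0 := by
  rw [cyclicMoment_zero] at hzero
  rw [cyclicMoment_one] at hone
  rw [cyclicMoment_two] at htwo
  have hprod : z 0 * z 1 = 0 := by
    have hsq : (3 * (z 0 * z 1)) ^ 2 = 0 := by
      linear_combination z 1 ^ 2 * hone - 2 * z 1 * z 2 * hzero + 4 * z 0 * z 1 * htwo
    simpa [h_three] using hsq
  have hlast : z 2 = 0 := by
    have hsq : z 2 ^ 2 = 0 := by linear_combination htwo - 2 * hprod
    exact pow_eq_zero_iff two_ne_zero |>.1 hsq
  ext i
  fin_cases i <;> simp_all

end CyclicAlgebra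

section SpectralCoordinates

/-- The coordinate along the line `ker A₅`. -/
def kerCoord : Matrix (Fin 1) (Fin 7) (ZMod 5) :=
  !![0, 0, 1, 0, -1, 0, 0]

/-- Coordinates on `ker (A₅³ - 1)` in which `A₅` is the rotation. -/
def cubeOneCoord : Matrix (Fin 3) (Fin 7) (ZMod 5) :=
  !![1, 0, 0, 0, 0, 2, 0;
     0, 0, 3, 1, 3, 0, 0;
     0, 1, 0, 0, 0, 0, 2]

/-- Coordinates on `ker (A₅³ - 2³)` in which `A₅` is twice the rotation. -/
def cubeEightCoord : Matrix (Fin 3) (Fin 7) (ZMod 5) :=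
  !![1, 0, 0, 0, 0, 3, 0;
     0, 0, 2, 3, 2, 0, 0;
     0, 2, 0, 0, 0, 0, 1]

theorem kerCoord_intertwine :
    ((0 : ZMod 5) • (1 : Matrix (Fin 1) (Fin 1) (ZMod 5))) * kerCoord = kerCoord * A5 := by
  decide

theorem cubeOneCoord_intertwine :
    ((1 : ZMod 5) • rotationMatrix (ZMod 5)) * cubeOneCoord = cubeOneCoord * A5 := by
  decide

theorem cubeEightCoord_intertwine :
    ((2 : ZMod 5) • rotationMatrix (ZMod 5)) * cubeEightCoord = cubeEightCoord * A5 := by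
  decide

theorem Jmat_eq_orthogonal_sum :
    Jmat = kerCoordᵀ * ((2 : ZMod 5) • (1 : Matrix (Fin 1) (Fin 1) (ZMod 5))) * kerCoord +
      cubeOneCoordᵀ * ((-1 : ZMod 5) • antidiagOne 3 (ZMod 5)) * cubeOneCoord +
      cubeEightCoordᵀ * ((3 : ZMod 5) • antidiagOne 3 (ZMod 5)) * cubeEightCoord := by
  decide +kernel

theorem moment_A5 (v : Fin 7 → ZMod 5) (k : ℕ) :
    moment Jmat A5 v k =
      2 * 0 ^ k * (kerCoord *ᵥ v ⬝ᵥ kerCoord *ᵥ v) - cyclicMoment (cubeOneCoord *ᵥ v) k +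
        3 * 2 ^ k * cyclicMoment (cubeEightCoord *ᵥ v) k := by
  rw [Jmat_eq_orthogonal_sum, moment_add_left, moment_add_left,
    ← moment_mulVec_of_intertwine _ kerCoord_intertwine,
    ← moment_mulVec_of_intertwine _ cubeOneCoord_intertwine,
    ← moment_mulVec_of_intertwine _ cubeEightCoord_intertwine,
    moment_smul_smul, moment_smul_smul, moment_smul_smul, moment_one_one, cyclicMoment,
    cyclicMoment]
  ring

theorem eq_zero_of_coords_eq_zero {v : Fin 7 → ZMod 5} (h_ker : kerCoord *ᵥ v = 0)
    (h_one : cubeOneCoord *ᵥ v = 0) (h_eight : cubeEightCoord *ᵥ v = 0) : v = 0 := by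
  have hJ : Jmat *ᵥ v = 0 := by
    simp only [Jmat_eq_orthogonal_sum, add_mulVec, ← mulVec_mulVec, h_ker, h_one, h_eight,
      mulVec_zero, add_zero]
  rw [Jmat_eq_antidiagOne, antidiagOne_mulVec] at hJ
  ext i
  simpa using congrFun hJ i.rev

theorem cyclicMoment_cubeEightCoord {v : Fin 7 → ZMod 5} (hv : ∀ k < 4, moment Jmat A5 v k = 0) :
    cyclicMoment (cubeEightCoord *ᵥ v) 0 = -cyclicMoment (cubeOneCoord *ᵥ v) 0 ∧
      cyclicMoment (cubeEightCoord *ᵥ v) 1 = cyclicMoment (cubeOneCoord *ᵥ v) 1 ∧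
      cyclicMoment (cubeEightCoord *ᵥ v) 2 = 3 * cyclicMoment (cubeOneCoord *ᵥ v) 2 := by
  have h_one := hv 1 (by decide)
  have h_two := hv 2 (by decide)
  have h_three := hv 3 (by decide)
  rw [moment_A5] at h_one h_two h_three
  rw [cyclicMoment_add_three _ 0, cyclicMoment_add_three _ 0] at h_three
  refine ⟨?_, ?_, ?_⟩ <;> grind

theorem two_mul_cyclicMoment_zero {v : Fin 7 → ZMod 5} (hv : ∀ k < 4, moment Jmat A5 v k = 0) :
    2 * cyclicMoment (cubeOneCoord *ᵥ v) 0 = (kerCoord *ᵥ v) 0 * (kerCoord *ᵥ v) 0 := by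
  have h_zero := hv 0 (by decide)
  rw [moment_A5, (cyclicMoment_cubeEightCoord hv).1, dotProduct, Fin.sum_univ_one] at h_zero
  grind

theorem two_mul_cyclicMoment_one {v : Fin 7 → ZMod 5} (hv : ∀ k < 4, moment Jmat A5 v k = 0) :
    2 * cyclicMoment (cubeOneCoord *ᵥ v) 1 = moment Jmat A5 v 4 := by
  rw [moment_A5, show 4 = 1 + 3 from rfl, cyclicMoment_add_three, cyclicMoment_add_three,
    (cyclicMoment_cubeEightCoord hv).2.1]
  grind

theorem eq_zero_of_isSquare_conditions {x y z : ZMod 5} :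
    IsSquare (2 * x) ∧ IsSquare (2 * y) ∧ IsSquare (x + y + z) ∧ IsSquare (-x + y + 3 * z) ∧
      IsSquare (eisensteinNorm x y z) ∧ IsSquare (eisensteinNorm (-x) y (3 * z)) →
    x = 0 ∧ y = 0 ∧ z = 0 := by
  revert x y z
  decide

theorem eq_zero_of_moment_A5 {v : Fin 7 → ZMod 5} (hv : ∀ k < 4, moment Jmat A5 v k = 0)
    (hsq : IsSquare (moment Jmat A5 v 4)) : v = 0 := by
  have h_three : (3 : ZMod 5) ≠ 0 := by decide
  have : Fact (Nat.Prime 5) := ⟨Nat.prime_five⟩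
  obtain ⟨h_zero, h_one, h_two⟩ := cyclicMoment_cubeEightCoord hv
  have hsum := isSquare_sum_cyclicMoment (cubeEightCoord *ᵥ v)
  have hnorm := isSquare_eisensteinNorm_cyclicMoment (cubeEightCoord *ᵥ v)
  rw [h_zero, h_one, h_two] at hsum hnorm
  obtain ⟨hx_zero, hx_one, hx_two⟩ := eq_zero_of_isSquare_conditions
    ⟨⟨_, two_mul_cyclicMoment_zero hv⟩, two_mul_cyclicMoment_one hv ▸ hsq,
      isSquare_sum_cyclicMoment _, hsum, isSquare_eisensteinNorm_cyclicMoment _, hnorm⟩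
  refine eq_zero_of_coords_eq_zero ?_
    (eq_zero_of_cyclicMoment_eq_zero h_three hx_zero hx_one hx_two)
    (eq_zero_of_cyclicMoment_eq_zero h_three ?_ ?_ ?_)
  · have hker := two_mul_cyclicMoment_zero hv
    rw [hx_zero, mul_zero, zero_eq_mul_self] at hker
    ext i
    rwa [Subsingleton.elim i 0]
  · rw [h_zero, hx_zero, neg_zero]
  · rw [h_one, hx_one]
  · rw [h_two, hx_two, mul_zero]

end SpectralCoordinates

theorem isSelfAdjoint_A5 : Jmat.IsSelfAdjoint A5 :=
  show A5ᵀ * Jmat = Jmat * A5 by decide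

theorem Jmat_mul_self : Jmat * Jmat = 1 := by
  decide

theorem isUnit_of_transpose_mul_Jmat_mul {g : Matrix (Fin 7) (Fin 7) (ZMod 5)}
    (hg : gᵀ * Jmat * g = Jmat) : IsUnit g := by
  refine IsUnit.of_mul_eq_one_right (Jmat * (gᵀ * Jmat)) ?_
  rw [Matrix.mul_assoc, hg, Jmat_mul_self]

/-- The `p = 5` analogue of Lemma 2.2: for every `g ∈ O₇(𝔽₅)`, the conjugate
`g⁻¹·A₅·g` does not vanish at all positions of `P`. -/
theorem stmt11 (g : Matrix (Fin 7) (Fin 7) (ZMod 5)) (hg : gᵀ * Jmat * g = Jmat) :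
    ∃ p ∈ P, (g⁻¹ * A5 * g) p.1 p.2 ≠ 0 := by
  by_contra! hB
  have hunit : IsUnit g := isUnit_of_transpose_mul_Jmat_mul hg
  have hconj : A5 * g = g * (g⁻¹ * A5 * g) := by
    rw [← Matrix.mul_assoc, ← Matrix.mul_assoc,
      mul_nonsing_inv g ((isUnit_iff_isUnit_det g).1 hunit), Matrix.one_mul]
  have hself := isSelfAdjoint_of_intertwine isSelfAdjoint_A5 hconj
  rw [hg, Jmat_eq_antidiagOne] at hself
  obtain ⟨hvanish, hsq⟩ := moment_single_zero_of_vanishing hself hB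
  simp only [← Jmat_eq_antidiagOne] at hvanish hsq
  have hmoment := moment_mulVec_of_intertwine Jmat hconj (Pi.single 0 1)
  simp only [hg] at hmoment
  simp only [← hmoment] at hvanish hsq
  have hcol : g *ᵥ Pi.single 0 1 = 0 := eq_zero_of_moment_A5 hvanish hsq
  have hzero : Pi.single 0 1 = (0 : Fin 7 → ZMod 5) :=
    mulVec_injective_of_isUnit hunit (hcol.trans (mulVec_zero g).symm)
  exact absurd (Pi.single_eq_zero_iff.1 hzero) (by decide)
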